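/- arXiv:1401.4698 — 2 statements merged into one kernel-verified Lean document; each statement's English description precedes it below -/
import Mathlib

section
/- Fix a real vector space X, an integer T ≥ 1 and f : X^{T+1} → EReal. For 0 ≤ t < T define the operator E_t mapping a function g : X^{t+2} → EReal to E_t(g) : X^{t+1} → EReal by E_t(g)(x₀,…,x_t) = sup_{μ ∈ M(x_t)} μ[g(x₀,…,x_t,·)]. Then for every x₀ ∈ X, the backward composition satisfies (E₀ ∘ E₁ ∘ ⋯ ∘ E_{T−1})(f)(x₀) = sup_{μ ∈ M^T(x₀)} μ[f]. -/
/-- An `EReal`-valued function on a real vector space is concave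
(with the convention `⊤ + ⊥ = ⊥` of `EReal`). -/
def IsEConcave {X : Type*} [AddCommGroup X] [Module ℝ X] (ψ : X → EReal) : Prop :=
  ∀ x y : X, ∀ a b : ℝ, 0 ≤ a → 0 ≤ b → a + b = 1 →
    (a : EReal) * ψ x + (b : EReal) * ψ y ≤ ψ (a • x + b • y)

/-- The concave envelope `g^♯` of `g : X → EReal`: the pointwise infimum of all
concave functions dominating `g`. -/
noncomputable def concaveEnvelope {X : Type*} [AddCommGroup X] [Module ℝ X]
    (g : X → EReal) (x : X) : EReal :=
  ⨅ ψ : {ψ : X → EReal // IsEConcave ψ ∧ ∀ y, g y ≤ ψ y}, ψ.1 x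

/-- A finitely supported probability measure `μ = Σ λᵢ δ_{xᵢ}` on `X` with
barycenter `x`; an element of `M(x)`. -/
structure SimpleProb (X : Type*) [AddCommGroup X] [Module ℝ X] (x : X) where
  supp : Finset X
  w : X → ℝ
  nonneg : ∀ y, 0 ≤ w y
  zero_off : ∀ y ∉ supp, w y = 0
  total : ∑ y ∈ supp, w y = 1
  bary : ∑ y ∈ supp, w y • y = x

/-- The integral `μ[g]` of an `EReal`-valued function under a finitely
supported probability measure, as a finite sum in `EReal`. -/
noncomputable def SimpleProb.exp {X : Type*} [AddCommGroup X] [Module ℝ X] {x : X}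
    (μ : SimpleProb X x) (g : X → EReal) : EReal :=
  ∑ y ∈ μ.supp, (μ.w y : EReal) * g y

/-- A finitely supported probability measure on `X^{T+1}` under which the coordinate
process is a martingale in its natural filtration, starting at `x₀`; an element of
`M^T(x₀)` (the law of a simple martingale `M₀, …, M_T` with `M₀ = x₀`).
The martingale property is expressed by testing the increment `π(t+1) - π(t)`
against all functions `h` of the path depending only on the first `t+1` coordinates. -/
structure MartLaw (X : Type*) [AddCommGroup X] [Module ℝ X] (T : ℕ) (x₀ : X) where
  supp : Finset (Fin (T + 1) → X)
  w : (Fin (T + 1) → X) → ℝ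
  nonneg : ∀ π, 0 ≤ w π
  zero_off : ∀ π ∉ supp, w π = 0
  total : ∑ π ∈ supp, w π = 1
  init : ∀ π ∈ supp, w π ≠ 0 → π 0 = x₀
  mart : ∀ t : Fin T, ∀ h : (Fin (T + 1) → X) → ℝ,
    (∀ π π' : Fin (T + 1) → X, (∀ s : Fin (T + 1), s ≤ t.castSucc → π s = π' s) → h π = h π') →
    ∑ π ∈ supp, (w π * h π) • (π t.succ - π t.castSucc) = 0

/-- The integral `μ[f]` of an `EReal`-valued function on path space under a finitely
supported martingale law, as a finite sum in `EReal`. -/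
noncomputable def MartLaw.exp {X : Type*} [AddCommGroup X] [Module ℝ X] {T : ℕ} {x₀ : X}
    (μ : MartLaw X T x₀) (f : (Fin (T + 1) → X) → EReal) : EReal :=
  ∑ π ∈ μ.supp, (μ.w π : EReal) * f π

/-- The operator `E_t`, mapping `g : X^{t+2} → EReal` to `E_t(g) : X^{t+1} → EReal`,
`E_t(g)(x₀,…,x_t) = sup_{μ ∈ M(x_t)} μ[g(x₀,…,x_t,·)]`. -/
noncomputable def Eop {X : Type*} [AddCommGroup X] [Module ℝ X] (t : ℕ)
    (g : (Fin (t + 2) → X) → EReal) : (Fin (t + 1) → X) → EReal :=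
  fun x => ⨆ μ : SimpleProb X (x (Fin.last t)), μ.exp fun y => g (Fin.snoc x y)

/-- The backward composition `E₀ ∘ E₁ ∘ ⋯ ∘ E_{s-1}`, mapping a function of `s+1`
variables to a function of one variable. -/
noncomputable def Ecomp {X : Type*} [AddCommGroup X] [Module ℝ X] :
    (s : ℕ) → ((Fin (s + 1) → X) → EReal) → ((Fin 1 → X) → EReal)
  | 0, g => g
  | s + 1, g => Ecomp s (Eop s g)

/-!
Appending to a martingale law on `X^{T+1}` a last step drawn from a barycentric transition gives a
martingale law on `X^{T+2}`, and disintegrating along the last step shows that every martingale law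
on `X^{T+2}` arises in this way. A supremum of finite sums over independent choices is the sum of
the suprema, so integrating `E_T f` against a law `μ` amounts to maximising the integral of `f` over
all extensions of `μ`. Peeling off one operator at a time gives the theorem by induction on `T`.
-/

section ExtendedReals

lemma ereal_coe_mul_sum {ι : Type*} {c : ℝ} (hc : 0 ≤ c) (s : Finset ι) (g : ι → EReal) :
    (c : EReal) * ∑ i ∈ s, g i = ∑ i ∈ s, (c : EReal) * g i :=
  let mulHom : EReal →+ EReal :=
    { toFun := fun a => c * a
      map_zero' := mul_zero _
      map_add' := EReal.left_distrib_of_nonneg_of_ne_top (EReal.coe_nonneg.2 hc)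
        (EReal.coe_ne_top c) }
  map_sum mulHom g s

lemma ereal_coe_mul_iSup {ι : Sort*} [Nonempty ι] {c : ℝ} (hc : 0 ≤ c) (g : ι → EReal) :
    (c : EReal) * ⨆ i, g i = ⨆ i, (c : EReal) * g i := by
  rcases hc.eq_or_lt with rfl | hpos
  · simp
  · have gc : GaloisConnection (fun a : EReal => c * a) (fun b => b / c) := fun a b => by
      rw [EReal.le_div_iff_mul_le (EReal.coe_pos.2 hpos) (EReal.coe_ne_top c), mul_comm]
    exact gc.l_iSup

lemma ereal_sum_iSup {ι : Type*} {κ : ι → Type*} [∀ i, Nonempty (κ i)] (s : Finset ι)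
    (g : ∀ i, κ i → EReal) :
    ∑ i ∈ s, ⨆ k, g i k = ⨆ c : ∀ i, κ i, ∑ i ∈ s, g i (c i) := by
  classical
  refine le_antisymm ?_ (iSup_le fun c => Finset.sum_le_sum fun i _ => le_iSup (g i) (c i))
  induction s using Finset.induction_on with
  | empty => simp
  | insert a s ha ih =>
    simp only [Finset.sum_insert ha]
    refine (add_le_add_right ih _).trans (EReal.add_le_of_forall_lt fun u hu v hv => ?_)
    obtain ⟨k, hk⟩ := lt_iSup_iff.1 hu
    obtain ⟨c, hc⟩ := lt_iSup_iff.1 hv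
    have update_off : ∑ i ∈ s, g i (Function.update c a k i) = ∑ i ∈ s, g i (c i) :=
      Finset.sum_congr rfl fun i hi => by
        rw [Function.update_of_ne (ne_of_mem_of_not_mem hi ha)]
    refine le_iSup_of_le (Function.update c a k) ?_
    rw [Function.update_self, update_off]
    exact add_le_add hk.le hc.le

end ExtendedReals

section Paths

variable {X : Type*} {n : ℕ}

/-- The finite set of paths obtained from a path `p ∈ S` by appending a point of `A p`. -/
def snocPaths (S : Finset (Fin n → X)) (A : (Fin n → X) → Finset X) :
    Finset (Fin (n + 1) → X) :=
  (S.sigma A).map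
    ⟨fun q => Fin.snoc q.1 q.2, fun ⟨p, y⟩ ⟨p', y'⟩ h => by
      obtain ⟨rfl, rfl⟩ := Fin.snoc_injective2 h
      rfl⟩

lemma mem_snocPaths {S : Finset (Fin n → X)} {A : (Fin n → X) → Finset X}
    {π : Fin (n + 1) → X} :
    π ∈ snocPaths S A ↔ Fin.init π ∈ S ∧ π (Fin.last n) ∈ A (Fin.init π) := by
  simp only [snocPaths, Finset.mem_map, Finset.mem_sigma]
  constructor
  · rintro ⟨⟨p, y⟩, hpy, hπ⟩
    obtain rfl : Fin.snoc p y = π := hπ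
    simpa only [Fin.init_snoc, Fin.snoc_last] using hpy
  · exact fun hπ => ⟨⟨Fin.init π, π (Fin.last n)⟩, hπ, Fin.snoc_init_self π⟩

lemma sum_snocPaths {M : Type*} [AddCommMonoid M] (S : Finset (Fin n → X))
    (A : (Fin n → X) → Finset X) (F : (Fin (n + 1) → X) → M) :
    ∑ π ∈ snocPaths S A, F π = ∑ p ∈ S, ∑ y ∈ A p, F (Fin.snoc p y) := by
  rw [snocPaths, Finset.sum_map, Finset.sum_sigma]
  rfl

/-- The finite set of points `y` such that the path `p` followed by `y` belongs to `S`. -/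
noncomputable def lastValues (S : Finset (Fin (n + 1) → X)) (p : Fin n → X) : Finset X :=
  S.preimage (fun y => Fin.snoc p y) (Fin.snoc_right_injective (α := fun _ => X) p).injOn

lemma mem_lastValues {S : Finset (Fin (n + 1) → X)} {p : Fin n → X} {y : X} :
    y ∈ lastValues S p ↔ Fin.snoc p y ∈ S :=
  Finset.mem_preimage

lemma snocPaths_lastValues [DecidableEq (Fin n → X)] (S : Finset (Fin (n + 1) → X)) :
    snocPaths (S.image Fin.init) (lastValues S) = S := by
  ext π
  rw [mem_snocPaths, mem_lastValues, Fin.snoc_init_self]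
  exact and_iff_right_of_imp (Finset.mem_image_of_mem _)

lemma sum_lastValues {M : Type*} [AddCommMonoid M] [DecidableEq (Fin n → X)]
    (S : Finset (Fin (n + 1) → X)) (p : Fin n → X) (F : (Fin (n + 1) → X) → M) :
    ∑ y ∈ lastValues S p, F (Fin.snoc p y) = ∑ π ∈ S, if Fin.init π = p then F π else 0 := by
  rw [lastValues, ← Finset.sum_preimage (fun y => Fin.snoc p y) S
    (Fin.snoc_right_injective (α := fun _ => X) p).injOn]
  · simp only [Fin.init_snoc, if_true]
  · refine fun π _ hπ => if_neg ?_
    rintro rfl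
    exact hπ ⟨π (Fin.last n), Fin.snoc_init_self π⟩

lemma apply_snoc_eq_of_dependsOn {β : Type*} {h : (Fin (n + 1) → X) → β} {t : Fin n}
    (hh : DependsOn h (Set.Iic t.castSucc)) (p : Fin n → X) (y z : X) :
    h (Fin.snoc p y) = h (Fin.snoc p z) := by
  refine hh fun s hs => ?_
  obtain ⟨i, rfl⟩ := Fin.exists_castSucc_eq.2 (hs.trans_lt (Fin.castSucc_lt_last t)).ne
  simp only [Fin.snoc_castSucc]

lemma dependsOn_comp_snoc {β : Type*} {h : (Fin (n + 1) → X) → β} {t : Fin n}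
    (hh : DependsOn h (Set.Iic t.castSucc)) (z : X) :
    DependsOn (fun p : Fin n → X => h (Fin.snoc p z)) (Set.Iic t) := by
  refine fun p p' hp => hh fun s hs => ?_
  obtain ⟨i, rfl⟩ := Fin.exists_castSucc_eq.2 (hs.trans_lt (Fin.castSucc_lt_last t)).ne
  simpa only [Fin.snoc_castSucc] using hp i (Fin.castSucc_le_castSucc_iff.1 hs)

lemma dependsOn_comp_init {β : Type*} {h : (Fin n → X) → β} {t : Fin n}
    (hh : DependsOn h (Set.Iic t)) :
    DependsOn (fun π : Fin (n + 1) → X => h (Fin.init π)) (Set.Iic t.castSucc) :=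
  fun _ _ hπ => hh fun s hs => hπ s.castSucc (Fin.castSucc_le_castSucc_iff.2 hs)

end Paths

section Laws

variable {X : Type*} [AddCommGroup X] [Module ℝ X]

namespace SimpleProb

variable {x : X}

open Classical in
/-- The Dirac mass at `x`. -/
noncomputable def dirac (x : X) : SimpleProb X x where
  supp := {x}
  w := fun y => if y = x then 1 else 0
  nonneg y := by split_ifs <;> norm_num
  zero_off y hy := if_neg (Finset.notMem_singleton.1 hy)
  total := by simp
  bary := by simp

instance : Nonempty (SimpleProb X x) := ⟨dirac x⟩

lemma sum_smul_sub (μ : SimpleProb X x) : ∑ y ∈ μ.supp, μ.w y • (y - x) = 0 := by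
  simp only [smul_sub, Finset.sum_sub_distrib, ← Finset.sum_smul, μ.bary, μ.total, one_smul,
    sub_self]

/-- The probability measure with weights proportional to `w`; the condition that it have
barycenter `x` is stated in the division-free form `Σ w(y) (y - x) = 0`. -/
noncomputable def normalize (A : Finset X) (w : X → ℝ) (nonneg : ∀ y, 0 ≤ w y)
    (zero_off : ∀ y ∉ A, w y = 0) (mass_ne_zero : ∑ y ∈ A, w y ≠ 0)
    (centered : ∑ y ∈ A, w y • (y - x) = 0) : SimpleProb X x where
  supp := A
  w y := (∑ z ∈ A, w z)⁻¹ * w y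
  nonneg y := mul_nonneg (inv_nonneg.2 (Finset.sum_nonneg fun z _ => nonneg z)) (nonneg y)
  zero_off y hy := by rw [zero_off y hy, mul_zero]
  total := by rw [← Finset.mul_sum, inv_mul_cancel₀ mass_ne_zero]
  bary := by
    simp only [smul_sub, Finset.sum_sub_distrib, ← Finset.sum_smul, sub_eq_zero] at centered
    simp only [mul_smul, ← Finset.smul_sum, centered, inv_smul_smul₀ mass_ne_zero]

end SimpleProb

/-- A one-step martingale transition: to every path of length `T + 1` it assigns a law for the next
point whose barycenter is the current endpoint. -/
abbrev MartKernel (X : Type*) [AddCommGroup X] [Module ℝ X] (T : ℕ) :=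
  ∀ p : Fin (T + 1) → X, SimpleProb X (p (Fin.last T))

namespace MartLaw

variable {T : ℕ} {x₀ : X}

lemma exp_eq_finsum (μ : MartLaw X T x₀) (f : (Fin (T + 1) → X) → EReal) :
    μ.exp f = ∑ᶠ π, (μ.w π : EReal) * f π := by
  refine (finsum_eq_sum_of_support_subset _ fun π hπ => by_contra fun hmem => hπ ?_).symm
  simp only [μ.zero_off π hmem, EReal.coe_zero, zero_mul]

lemma exp_congr {μ ν : MartLaw X T x₀} (h : μ.w = ν.w) (f : (Fin (T + 1) → X) → EReal) :
    μ.exp f = ν.exp f := by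
  rw [exp_eq_finsum, exp_eq_finsum, h]

open Classical in
/-- The law of the martingale that stays at `x₀`. -/
noncomputable def const (T : ℕ) (x₀ : X) : MartLaw X T x₀ where
  supp := {fun _ => x₀}
  w π := if π = fun _ => x₀ then 1 else 0
  nonneg π := by split_ifs <;> norm_num
  zero_off π hπ := if_neg (Finset.notMem_singleton.1 hπ)
  total := by simp
  init π hπ _ := by rw [Finset.mem_singleton.1 hπ]
  mart t h _ := by simp

instance : Nonempty (MartLaw X T x₀) := ⟨const T x₀⟩

lemma exp_of_horizon_zero (μ : MartLaw X 0 x₀) (f : (Fin 1 → X) → EReal) :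
    μ.exp f = f fun _ => x₀ := by
  have w_of_ne (π : Fin 1 → X) (hπ : π ≠ fun _ => x₀) : μ.w π = 0 := by
    by_contra hw
    have hmem : π ∈ μ.supp := by_contra fun hmem => hw (μ.zero_off π hmem)
    exact hπ (funext fun i => by rw [Fin.eq_zero i, μ.init π hmem hw])
  have w_const : μ.w (fun _ => x₀) = 1 := by
    rw [← μ.total, Finset.sum_eq_single _ (fun π _ => w_of_ne π) (μ.zero_off _)]
  rw [exp_eq_finsum, finsum_eq_single _ (fun _ => x₀) fun π hπ => by rw [w_of_ne π hπ]; simp,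
    w_const, EReal.coe_one, one_mul]

section Extend

variable (μ : MartLaw X T x₀) (ν : MartKernel X T)

/-- The weight of a path under the law `μ` prolonged by one step of the transition `ν`. -/
def extendWeight (π : Fin (T + 2) → X) : ℝ :=
  μ.w (Fin.init π) * (ν (Fin.init π)).w (π (Fin.last (T + 1)))

lemma extendWeight_snoc (p : Fin (T + 1) → X) (y : X) :
    μ.extendWeight ν (Fin.snoc p y) = μ.w p * (ν p).w y := by
  rw [extendWeight, Fin.init_snoc, Fin.snoc_last]

lemma sum_extendWeight_smul {E : Type*} [AddCommMonoid E] [Module ℝ E]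
    (F : (Fin (T + 2) → X) → E) :
    ∑ π ∈ snocPaths μ.supp fun p => (ν p).supp, μ.extendWeight ν π • F π =
      ∑ p ∈ μ.supp, μ.w p • ∑ y ∈ (ν p).supp, (ν p).w y • F (Fin.snoc p y) := by
  simp only [sum_snocPaths, extendWeight_snoc, mul_smul, Finset.smul_sum]

lemma sum_extendWeight_smul_increment (t : Fin (T + 1)) {h : (Fin (T + 2) → X) → ℝ}
    (hh : DependsOn h (Set.Iic t.castSucc)) :
    ∑ π ∈ snocPaths μ.supp fun p => (ν p).supp,
      (μ.extendWeight ν π * h π) • (π t.succ - π t.castSucc) = 0 := by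
  have h_snoc (p : Fin (T + 1) → X) (y : X) : h (Fin.snoc p y) = h (Fin.snoc p 0) :=
    apply_snoc_eq_of_dependsOn hh p y 0
  simp only [mul_smul, sum_extendWeight_smul, h_snoc]
  induction t using Fin.lastCases with
  | last =>
    simp only [Fin.succ_last, Fin.snoc_last, Fin.snoc_castSucc, smul_comm _ (h _),
      ← Finset.smul_sum, (ν _).sum_smul_sub, smul_zero, Finset.sum_const_zero]
  | cast t =>
    simp only [Fin.succ_castSucc, Fin.snoc_castSucc, ← Finset.sum_smul, (ν _).total, one_smul]
    simp only [← mul_smul]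
    exact μ.mart t _ fun _ _ hp => dependsOn_comp_snoc hh 0 hp

/-- The martingale law `μ` prolonged by one step of the transition `ν`. -/
def extend : MartLaw X (T + 1) x₀ where
  supp := snocPaths μ.supp fun p => (ν p).supp
  w := μ.extendWeight ν
  nonneg π := mul_nonneg (μ.nonneg _) ((ν _).nonneg _)
  zero_off π hπ := by
    rw [mem_snocPaths, not_and_or] at hπ
    rcases hπ with hinit | hlast
    · rw [extendWeight, μ.zero_off _ hinit, zero_mul]
    · rw [extendWeight, (ν _).zero_off _ hlast, mul_zero]
  total := by
    simpa only [smul_eq_mul, mul_one, (ν _).total, μ.total] using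
      μ.sum_extendWeight_smul ν fun _ => (1 : ℝ)
  init π hπ hw := μ.init (Fin.init π) (mem_snocPaths.1 hπ).1 (left_ne_zero_of_mul hw)
  mart t _ hh := μ.sum_extendWeight_smul_increment ν t fun π π' => hh π π'

lemma exp_extend (f : (Fin (T + 2) → X) → EReal) :
    (μ.extend ν).exp f =
      ∑ p ∈ μ.supp, (μ.w p : EReal) * (ν p).exp fun y => f (Fin.snoc p y) := by
  simp only [exp, extend, SimpleProb.exp, sum_snocPaths, extendWeight_snoc, EReal.coe_mul,
    mul_assoc, ereal_coe_mul_sum (μ.nonneg _)]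

lemma exp_Eop (f : (Fin (T + 2) → X) → EReal) :
    μ.exp (Eop T f) = ⨆ ν : MartKernel X T, (μ.extend ν).exp f := by
  simp only [exp_extend]
  simp only [exp, Eop, ereal_coe_mul_iSup (μ.nonneg _), ereal_sum_iSup]

end Extend

section Disintegration

variable (μ : MartLaw X (T + 1) x₀)

/-- The mass under `μ` of the paths whose initial segment is `p`. -/
noncomputable def margWeight (p : Fin (T + 1) → X) : ℝ :=
  ∑ y ∈ lastValues μ.supp p, μ.w (Fin.snoc p y)

lemma margWeight_nonneg (p : Fin (T + 1) → X) : 0 ≤ μ.margWeight p :=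
  Finset.sum_nonneg fun _ _ => μ.nonneg _

lemma sum_margWeight_smul [DecidableEq (Fin (T + 1) → X)] {E : Type*} [AddCommMonoid E]
    [Module ℝ E] (G : (Fin (T + 1) → X) → E) :
    ∑ p ∈ μ.supp.image Fin.init, μ.margWeight p • G p =
      ∑ π ∈ μ.supp, μ.w π • G (Fin.init π) := by
  conv_rhs => rw [← snocPaths_lastValues μ.supp]
  simp only [sum_snocPaths, Fin.init_snoc, margWeight, Finset.sum_smul]

open Classical in
/-- The joint law under `μ` of all coordinates but the last. -/
noncomputable def marg : MartLaw X T x₀ where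
  supp := μ.supp.image Fin.init
  w := μ.margWeight
  nonneg := μ.margWeight_nonneg
  zero_off p hp := Finset.sum_eq_zero fun y hy => absurd
    (Finset.mem_image.2 ⟨_, mem_lastValues.1 hy, Fin.init_snoc _ _⟩) hp
  total := by
    simpa only [smul_eq_mul, mul_one, μ.total] using μ.sum_margWeight_smul fun _ => (1 : ℝ)
  init p _ hw := by
    obtain ⟨y, hy, hy_ne⟩ := Finset.exists_ne_zero_of_sum_ne_zero hw
    simpa using μ.init _ (mem_lastValues.1 hy) hy_ne
  mart t h hh := by
    simp only [mul_smul, sum_margWeight_smul]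
    simp only [← mul_smul]
    exact μ.mart t.castSucc _ fun _ _ hπ => dependsOn_comp_init (fun p p' => hh p p') hπ

lemma sum_lastValues_smul_sub (p : Fin (T + 1) → X) :
    ∑ y ∈ lastValues μ.supp p, μ.w (Fin.snoc p y) • (y - p (Fin.last T)) = 0 := by
  classical
  -- The martingale property is tested against the indicator of the event that `p` has occurred.
  have h_init : DependsOn (fun π : Fin (T + 2) → X => if Fin.init π = p then (1 : ℝ) else 0)
      (Set.Iic (Fin.last T).castSucc) :=
    dependsOn_comp_init (h := fun q => if q = p then (1 : ℝ) else 0) fun q q' hq => by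
      rw [show q = q' from funext fun i => hq i (Fin.le_last i)]
  calc ∑ y ∈ lastValues μ.supp p, μ.w (Fin.snoc p y) • (y - p (Fin.last T))
      = ∑ y ∈ lastValues μ.supp p, μ.w (Fin.snoc p y) •
          ((Fin.snoc p y : Fin (T + 2) → X) (Fin.last T).succ -
            (Fin.snoc p y : Fin (T + 2) → X) (Fin.last T).castSucc) := by
        simp only [Fin.succ_last, Fin.snoc_last, Fin.snoc_castSucc]
    _ = ∑ π ∈ μ.supp, if Fin.init π = p then
          μ.w π • (π (Fin.last T).succ - π (Fin.last T).castSucc) else 0 :=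
        sum_lastValues μ.supp p fun π =>
          μ.w π • (π (Fin.last T).succ - π (Fin.last T).castSucc)
    _ = ∑ π ∈ μ.supp, (μ.w π * if Fin.init π = p then 1 else 0) •
          (π (Fin.last T).succ - π (Fin.last T).castSucc) := by
        simp only [mul_ite, ite_smul, mul_one, mul_zero, zero_smul]
    _ = 0 := μ.mart (Fin.last T) _ fun _ _ hπ => h_init hπ

open Classical in
/-- The conditional law of the last coordinate under `μ` given the preceding ones; on paths of mass
zero it is a Dirac mass, for want of a canonical choice. -/
noncomputable def cond : MartKernel X T := fun p =>
  if mass_ne_zero : μ.margWeight p ≠ 0 then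
    SimpleProb.normalize (lastValues μ.supp p) (fun y => μ.w (Fin.snoc p y))
      (fun _ => μ.nonneg _) (fun _ hy => μ.zero_off _ fun hmem => hy (mem_lastValues.2 hmem))
      mass_ne_zero (μ.sum_lastValues_smul_sub p)
  else SimpleProb.dirac _

lemma margWeight_mul_cond (p : Fin (T + 1) → X) (y : X) :
    μ.margWeight p * (μ.cond p).w y = μ.w (Fin.snoc p y) := by
  by_cases mass : μ.margWeight p = 0
  · have w_eq_zero : μ.w (Fin.snoc p y) = 0 := by
      by_cases hy : Fin.snoc p y ∈ μ.supp
      · exact (Finset.sum_eq_zero_iff_of_nonneg fun _ _ => μ.nonneg _).1 mass y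
          (mem_lastValues.2 hy)
      · exact μ.zero_off _ hy
    rw [mass, w_eq_zero, zero_mul]
  · rw [cond, dif_pos mass]
    exact mul_inv_cancel_left₀ mass _

lemma extend_marg_cond_w : (μ.marg.extend μ.cond).w = μ.w := by
  funext π
  exact (μ.margWeight_mul_cond _ _).trans (by rw [Fin.snoc_init_self])

end Disintegration

lemma iSup_exp_Eop (f : (Fin (T + 2) → X) → EReal) :
    ⨆ μ : MartLaw X T x₀, μ.exp (Eop T f) = ⨆ μ : MartLaw X (T + 1) x₀, μ.exp f := by
  simp only [exp_Eop]
  apply le_antisymm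
  · exact iSup₂_le fun μ ν => le_iSup (fun μ' : MartLaw X (T + 1) x₀ => μ'.exp f) (μ.extend ν)
  · refine iSup_le fun μ => ?_
    rw [← exp_congr μ.extend_marg_cond_w]
    exact le_iSup₂ (f := fun (μ : MartLaw X T x₀) ν => (μ.extend ν).exp f) μ.marg μ.cond

end MartLaw

end Laws

/-- For `T ≥ 1` and `f : X^{T+1} → EReal`, the backward composition
`(E₀ ∘ ⋯ ∘ E_{T-1})(f)(x₀)` equals `sup_{μ ∈ M^T(x₀)} μ[f]`. -/
theorem Ecomp_eq_sup_martLaw {X : Type*} [AddCommGroup X] [Module ℝ X]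
    (T : ℕ) (hT : 1 ≤ T) (f : (Fin (T + 1) → X) → EReal) (x₀ : X) :
    Ecomp T f (fun _ => x₀) = ⨆ μ : MartLaw X T x₀, μ.exp f := by
  clear hT
  induction T with
  | zero =>
    simp only [MartLaw.exp_of_horizon_zero, iSup_const]
    rfl
  | succ T ih => exact (ih (Eop T f)).trans (MartLaw.iSup_exp_Eop f)
end

section
/- Let X be a real vector space, Z a nonempty set, φ : Z × X → Z with φ(z,0) = z for all z, and f : Z → EReal. Then the sequence (A^n f)_{n∈ℕ} is pointwise nondecreasing, so the pointwise limit A^∞f(z) := lim_{n→∞} A^n f(z) exists in EReal; moreover A(A^∞f) = A^∞f, A^∞f ≥ f, and A^∞f is the smallest fixed point of A dominating f: any g : Z → EReal with Ag = g and g ≥ f satisfies g ≥ A^∞f pointwise. -/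
/-- The operator `A`: `Ag(z) = (g ∘ φ(z,·))^♯(0)`. -/
noncomputable def Aop {X Z : Type*} [AddCommGroup X] [Module ℝ X]
    (φ : Z → X → Z) (g : Z → EReal) : Z → EReal :=
  fun z => concaveEnvelope (fun d => g (φ z d)) 0

/-!
The operator `A` is inflationary because `φ(z, 0) = z`, so everything follows from Kleene's fixed
point theorem started at `f` once `A` is shown to commute with directed suprema. For this it
suffices that a directed supremum of concave functions is concave: then `⨆ i, (g i)^♯` is a concave
majorant of `⨆ i, g i`. Concavity survives the supremum because the convention `⊤ + ⊥ = ⊥` makes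
addition of extended reals commute with suprema in each variable.
-/

open OmegaCompletePartialOrder

theorem ereal_iSup_add_iSup_le {ι κ : Sort*} {u : ι → EReal} {v : κ → EReal} {c : EReal}
    (h : ∀ i j, u i + v j ≤ c) : (⨆ i, u i) + ⨆ j, v j ≤ c := by
  refine EReal.add_le_of_forall_lt fun r hr s hs => ?_
  obtain ⟨i, hi⟩ := lt_iSup_iff.1 hr
  obtain ⟨j, hj⟩ := lt_iSup_iff.1 hs
  exact (add_le_add hi.le hj.le).trans (h i j)

theorem ereal_coe_mul_iSup_s6 {ι : Sort*} {a : ℝ} (ha : 0 < a) (u : ι → EReal) :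
    (a : EReal) * ⨆ i, u i = ⨆ i, (a : EReal) * u i := by
  have gc : GaloisConnection (fun x : EReal => (a : EReal) * x) (fun x => x / a) := fun x y => by
    rw [EReal.le_div_iff_mul_le (EReal.coe_pos.2 ha) (EReal.coe_ne_top a), mul_comm]
  exact gc.l_iSup

section Concave

variable {X : Type*} [AddCommGroup X] [Module ℝ X]

theorem IsEConcave.iInf {ι : Sort*} {ψ : ι → X → EReal} (hψ : ∀ i, IsEConcave (ψ i)) :
    IsEConcave fun x => ⨅ i, ψ i x := by
  intro x y a b ha hb hab
  refine le_iInf fun i => le_trans ?_ (hψ i x y a b ha hb hab)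
  exact add_le_add
    (mul_le_mul_of_nonneg_left (iInf_le _ i) (EReal.coe_nonneg.2 ha))
    (mul_le_mul_of_nonneg_left (iInf_le _ i) (EReal.coe_nonneg.2 hb))

theorem IsEConcave.iSup_of_directed {ι : Sort*} {ψ : ι → X → EReal}
    (hψ : ∀ i, IsEConcave (ψ i)) (hdir : Directed (· ≤ ·) ψ) : IsEConcave (⨆ i, ψ i) := by
  intro x y a b ha hb hab
  -- Zero weights are separated because `0 * ⨆ i, u i = ⨆ i, 0 * u i` fails over an empty index.
  rcases ha.eq_or_lt with rfl | ha_pos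
  · obtain rfl : b = 1 := by linarith
    simp
  rcases hb.eq_or_lt with rfl | hb_pos
  · obtain rfl : a = 1 := by linarith
    simp
  simp only [iSup_apply, ereal_coe_mul_iSup_s6 ha_pos, ereal_coe_mul_iSup_s6 hb_pos]
  refine ereal_iSup_add_iSup_le fun i j => ?_
  obtain ⟨k, hik, hjk⟩ := hdir i j
  calc (a : EReal) * ψ i x + b * ψ j y
      ≤ a * ψ k x + b * ψ k y := add_le_add
        (mul_le_mul_of_nonneg_left (hik x) (EReal.coe_nonneg.2 ha))
        (mul_le_mul_of_nonneg_left (hjk y) (EReal.coe_nonneg.2 hb))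
    _ ≤ ψ k (a • x + b • y) := hψ k x y a b ha hb hab
    _ ≤ ⨆ i, ψ i (a • x + b • y) := le_iSup (fun i => ψ i (a • x + b • y)) k

theorem isEConcave_concaveEnvelope (g : X → EReal) : IsEConcave (concaveEnvelope g) :=
  .iInf fun ψ => ψ.2.1

theorem le_concaveEnvelope (g : X → EReal) : g ≤ concaveEnvelope g :=
  fun x => le_iInf fun ψ => ψ.2.2 x

theorem concaveEnvelope_le_iff {g ψ : X → EReal} (hψ : IsEConcave ψ) :
    concaveEnvelope g ≤ ψ ↔ g ≤ ψ :=
  ⟨(le_concaveEnvelope g).trans, fun hg x =>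
    iInf_le (fun ψ : {ψ : X → EReal // IsEConcave ψ ∧ ∀ y, g y ≤ ψ y} => ψ.1 x) ⟨ψ, hψ, hg⟩⟩

theorem concaveEnvelope_mono : Monotone (concaveEnvelope (X := X)) := fun _ h hgh =>
  (concaveEnvelope_le_iff (isEConcave_concaveEnvelope h)).2 (hgh.trans (le_concaveEnvelope h))

theorem concaveEnvelope_iSup_of_directed {ι : Sort*} {g : ι → X → EReal}
    (hg : Directed (· ≤ ·) g) :
    concaveEnvelope (⨆ i, g i) = ⨆ i, concaveEnvelope (g i) := by
  have concave_iSup : IsEConcave (⨆ i, concaveEnvelope (g i)) :=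
    .iSup_of_directed (fun i => isEConcave_concaveEnvelope (g i))
      (hg.mono_comp _ concaveEnvelope_mono)
  exact le_antisymm
    ((concaveEnvelope_le_iff concave_iSup).2 (iSup_mono fun i => le_concaveEnvelope (g i)))
    concaveEnvelope_mono.le_map_iSup

end Concave

section Operator

variable {X Z : Type*} [AddCommGroup X] [Module ℝ X]

theorem Aop_mono (φ : Z → X → Z) : Monotone (Aop φ) :=
  fun _ _ hgh z => concaveEnvelope_mono (fun d => hgh (φ z d)) 0

theorem le_Aop {φ : Z → X → Z} (hφ : ∀ z, φ z 0 = z) (g : Z → EReal) : g ≤ Aop φ g := fun z =>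
  calc g z = g (φ z 0) := by rw [hφ]
    _ ≤ Aop φ g z := le_concaveEnvelope (fun d => g (φ z d)) 0

theorem Aop_iSup_of_directed (φ : Z → X → Z) {ι : Sort*} {g : ι → Z → EReal}
    (hg : Directed (· ≤ ·) g) : Aop φ (⨆ i, g i) = ⨆ i, Aop φ (g i) := by
  funext z
  have hdir : Directed (· ≤ ·) fun i d => g i (φ z d) :=
    hg.mono_comp (g := fun h d => h (φ z d)) _ fun _ _ hle d => hle (φ z d)
  have comp_iSup : (fun d => (⨆ i, g i) (φ z d)) = ⨆ i, fun d => g i (φ z d) := by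
    funext d
    simp only [iSup_apply]
  calc Aop φ (⨆ i, g i) z = concaveEnvelope (⨆ i, fun d => g i (φ z d)) 0 :=
        congrArg (fun h => concaveEnvelope h 0) comp_iSup
    _ = (⨆ i, Aop φ (g i)) z := by
        simp only [concaveEnvelope_iSup_of_directed hdir, iSup_apply, Aop]

theorem ωScottContinuous_Aop (φ : Z → X → Z) : ωScottContinuous (Aop φ) := by
  have ωSup_eq_iSup (c : Chain (Z → EReal)) : ωSup c = ⨆ n, c n :=
    (ωSup_eq_of_isLUB isLUB_iSup).symm
  refine ωScottContinuous_iff_monotone_map_ωSup.2 ⟨Aop_mono φ, fun c => ?_⟩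
  rw [ωSup_eq_iSup, ωSup_eq_iSup]
  exact Aop_iSup_of_directed φ c.directed

end Operator

/-- The sequence `(Aⁿf)ₙ` is pointwise nondecreasing, hence converges
pointwise to `A^∞f := ⨆ n, Aⁿf`; moreover `A(A^∞f) = A^∞f`, `A^∞f ≥ f`, and `A^∞f` is
the smallest fixed point of `A` dominating `f`. -/
theorem Aop_iterate_limit {X Z : Type*} [AddCommGroup X] [Module ℝ X] [Nonempty Z]
    (φ : Z → X → Z) (hφ : ∀ z, φ z 0 = z) (f : Z → EReal) :
    (∀ z, Monotone fun n : ℕ => (Aop φ)^[n] f z) ∧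
    (∀ z, Filter.Tendsto (fun n : ℕ => (Aop φ)^[n] f z) Filter.atTop
      (nhds (⨆ n : ℕ, (Aop φ)^[n] f z))) ∧
    Aop φ (fun z => ⨆ n : ℕ, (Aop φ)^[n] f z) = (fun z => ⨆ n : ℕ, (Aop φ)^[n] f z) ∧
    (∀ z, f z ≤ ⨆ n : ℕ, (Aop φ)^[n] f z) ∧
    (∀ g : Z → EReal, Aop φ g = g → (∀ z, f z ≤ g z) →
      ∀ z, (⨆ n : ℕ, (Aop φ)^[n] f z) ≤ g z) := by
  have hf : f ≤ Aop φ f := le_Aop hφ f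
  have hmono : Monotone fun n : ℕ => (Aop φ)^[n] f := (Aop_mono φ).monotone_iterate_of_le_map hf
  let A : (Z → EReal) →𝒄 (Z → EReal) := .ofFun (Aop φ) (ωScottContinuous_Aop φ)
  exact ⟨fun z _ _ hnm => hmono hnm z,
    fun z => tendsto_atTop_iSup fun _ _ hnm => hmono hnm z,
    fixedPoints.ωSup_iterate_mem_fixedPoint A f hf,
    fun z => le_iSup (fun n : ℕ => (Aop φ)^[n] f z) 0,
    fun _ hg hfg => fixedPoints.ωSup_iterate_le_fixedPoint A f hf hg hfg⟩
end
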